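/- Let K > 0 and N > 1, set κ := K/(N−1), c := ∫₀^{π/√κ} sin_κ(r)^{N−1} dr, and define f : [0, π/√κ] → [0,1] by f(t) := c^{−1}·∫₀^t sin_κ(r)^{N−1} dr. Then the model isoperimetric profile h := f' ∘ f^{−1} : [0,1] → [0,∞), where f'(t) = c^{−1}·sin_κ(t)^{N−1}, is a concave function on [0,1]. -/

import Mathlib

/-!
The profile is the density of a log-concave measure evaluated at a quantile. If `F' = φ > 0` and `g`
is a right inverse of `F`, Cauchy's mean value theorem for the pair `(φ, F)` writes each slope of
`φ ∘ g` as `φ' ξ / φ ξ = (log φ)' ξ` with `ξ` between the two quantiles. Hence slopes decrease as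
soon as `log φ` is concave, and for `φ = c⁻¹ sin_κ ^ (N - 1)` this follows from concavity of `sin_κ`
on `[0, π / √κ]`.
-/

open Real Set Filter MeasureTheory Topology

/-- Generalized sine: the solution of `v'' + κ v = 0`, `v 0 = 0`, `v' 0 = 1`. -/
noncomputable def sinK (κ r : ℝ) : ℝ :=
  if 0 < κ then Real.sin (Real.sqrt κ * r) / Real.sqrt κ
  else if κ = 0 then r
  else Real.sinh (Real.sqrt (-κ) * r) / Real.sqrt (-κ)

/-- Generalized cosine: the solution of `v'' + κ v = 0`, `v 0 = 1`, `v' 0 = 0`. -/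
noncomputable def cosK (κ r : ℝ) : ℝ :=
  if 0 < κ then Real.cos (Real.sqrt κ * r)
  else if κ = 0 then 1
  else Real.cosh (Real.sqrt (-κ) * r)

/-- Distortion coefficient `σ_κ^{(t)}(θ)` (for `θ < π_κ`; `σ_κ^{(t)}(0) = t`). -/
noncomputable def sigmaCoeff (κ t θ : ℝ) : ℝ :=
  if θ = 0 then t else sinK κ (t * θ) / sinK κ θ

/-- `u` is `σ_κ`-concave on `I ⊆ ℝ`.  The requirement `θ := |r₁ - r₀| < π_κ`
(encoded by `κ ≤ 0 ∨ |r₁ - r₀| < π/√κ`) expresses that the inequality with the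
value `σ_κ^{(t)}(θ) = ∞` for `θ ≥ π_κ` cannot hold for a positive function. -/
def IsSigmaConcaveOn (κ : ℝ) (I : Set ℝ) (u : ℝ → ℝ) : Prop :=
  ∀ r₀ ∈ I, ∀ r₁ ∈ I,
    (r₀ ≠ r₁ → (κ ≤ 0 ∨ |r₁ - r₀| < Real.pi / Real.sqrt κ)) ∧
    ∀ t ∈ Set.Icc (0:ℝ) 1,
      sigmaCoeff κ (1 - t) |r₁ - r₀| * u r₀ + sigmaCoeff κ t |r₁ - r₀| * u r₁
        ≤ u ((1 - t) * r₀ + t * r₁)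

/-- Right derivative `d⁺u(r) = L`, i.e. `(u (r+h) - u r)/h → L` as `h ↓ 0`. -/
def HasRightDerivAt (u : ℝ → ℝ) (r L : ℝ) : Prop :=
  Filter.Tendsto (fun h : ℝ => (u (r + h) - u r) / h) (nhdsWithin 0 (Set.Ioi 0)) (nhds L)

/-- Left derivative `d⁻u(r) = L`, i.e. `(u (r-h) - u r)/(-h) → L` as `h ↓ 0`. -/
def HasLeftDerivAt (u : ℝ → ℝ) (r L : ℝ) : Prop :=
  Filter.Tendsto (fun h : ℝ => (u (r - h) - u r) / (-h)) (nhdsWithin 0 (Set.Ioi 0)) (nhds L)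

/-- The Jacobian function `J_{H,K,N}(r) = (cos_{K/(N-1)}(r) + H/(N-1) sin_{K/(N-1)}(r))₊^{N-1}`. -/
noncomputable def Jac (H K N r : ℝ) : ℝ :=
  (max (cosK (K/(N-1)) r + (H/(N-1)) * sinK (K/(N-1)) r) 0) ^ (N-1)

section Quantile

variable {I D : Set ℝ} {F φ g : ℝ → ℝ}

theorem exists_sub_eq_logDeriv_mul_sub {x y : ℝ} (hxy : x < y)
    (hF : ContinuousOn F (Icc x y)) (hFφ : ∀ t ∈ Ioo x y, HasDerivAt F (φ t) t)
    (hφ : ContinuousOn φ (Icc x y)) (hφ' : DifferentiableOn ℝ φ (Ioo x y))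
    (hφ0 : ∀ t ∈ Ioo x y, φ t ≠ 0) :
    ∃ ξ ∈ Ioo x y, φ y - φ x = logDeriv φ ξ * (F y - F x) := by
  obtain ⟨ξ, hξ, hcauchy⟩ := exists_ratio_hasDerivAt_eq_ratio_slope φ (deriv φ) hxy hφ
    (fun t ht => (hφ'.differentiableAt (isOpen_Ioo.mem_nhds ht)).hasDerivAt) F φ hF hFφ
  refine ⟨ξ, hξ, ?_⟩
  rw [logDeriv_apply, div_mul_eq_mul_div, eq_div_iff (hφ0 ξ hξ), ← hcauchy, mul_comm]

theorem antitoneOn_logDeriv_of_concaveOn_log (hI : IsOpen I) (hφ : DifferentiableOn ℝ φ I)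
    (hφ0 : ∀ t ∈ I, φ t ≠ 0) (hlog : ConcaveOn ℝ I (log ∘ φ)) :
    AntitoneOn (logDeriv φ) I := by
  have hdiff : ∀ t ∈ I, DifferentiableAt ℝ φ t := fun t ht => hφ.differentiableAt (hI.mem_nhds ht)
  have hderiv : EqOn (deriv (log ∘ φ)) (logDeriv φ) I := fun t ht =>
    Real.deriv_log_comp_eq_logDeriv (hdiff t ht) (hφ0 t ht)
  exact (hlog.antitoneOn_deriv fun t ht => (hdiff t ht).log (hφ0 t ht)).congr hderiv

theorem concaveOn_density_comp_quantile (hI : Convex ℝ I) (hD : Convex ℝ D)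
    (hF : ContinuousOn F I) (hFφ : ∀ t ∈ interior I, HasDerivAt F (φ t) t)
    (hφ : ContinuousOn φ I) (hφ' : DifferentiableOn ℝ φ (interior I))
    (hpos : ∀ t ∈ interior I, 0 < φ t) (hlog : ConcaveOn ℝ (interior I) (log ∘ φ))
    (hg : MapsTo g D I) (hFg : RightInvOn g F D) :
    ConcaveOn ℝ D (φ ∘ g) := by
  have hF_strictMono : StrictMonoOn F I := strictMonoOn_of_hasDerivWithinAt_pos hI hF
    (fun t ht => (hFφ t ht).hasDerivWithinAt) hpos
  have slope_eq : ∀ u ∈ D, ∀ v ∈ D, u < v → ∃ ξ ∈ Ioo (g u) (g v), ξ ∈ interior I ∧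
      ((φ ∘ g) v - (φ ∘ g) u) / (v - u) = logDeriv φ ξ := by
    intro u hu v hv huv
    have hguv : g u < g v := by
      rwa [← hF_strictMono.lt_iff_lt (hg hu) (hg hv), hFg hu, hFg hv]
    have hIcc : Icc (g u) (g v) ⊆ I := hI.ordConnected.out (hg hu) (hg hv)
    have hIoo : Ioo (g u) (g v) ⊆ interior I :=
      interior_maximal (Ioo_subset_Icc_self.trans hIcc) isOpen_Ioo
    obtain ⟨ξ, hξ, hslope⟩ := exists_sub_eq_logDeriv_mul_sub hguv (hF.mono hIcc)
      (fun t ht => hFφ t (hIoo ht)) (hφ.mono hIcc) (hφ'.mono hIoo)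
      (fun t ht => (hpos t (hIoo ht)).ne')
    rw [hFg hu, hFg hv] at hslope
    exact ⟨ξ, hξ, hIoo hξ, (div_eq_iff (sub_pos.2 huv).ne').2 hslope⟩
  have hanti : AntitoneOn (logDeriv φ) (interior I) :=
    antitoneOn_logDeriv_of_concaveOn_log isOpen_interior hφ' (fun t ht => (hpos t ht).ne') hlog
  refine concaveOn_of_slope_anti_adjacent hD fun {u v w} hu hw huv hvw => ?_
  have hv : v ∈ D := hD.ordConnected.out hu hw ⟨huv.le, hvw.le⟩
  obtain ⟨ξ, hξ, hξI, hslope_uv⟩ := slope_eq u hu v hv huv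
  obtain ⟨η, hη, hηI, hslope_vw⟩ := slope_eq v hv w hw hvw
  rw [hslope_uv, hslope_vw]
  exact hanti hξI hηI (hξ.2.trans hη.1).le

end Quantile

section LogConcave

variable {E : Type*} [AddCommMonoid E] [SMul ℝ E] {s : Set E} {f : E → ℝ}

theorem concaveOn_log_comp (hf : ConcaveOn ℝ s f) (hpos : ∀ x ∈ s, 0 < f x) :
    ConcaveOn ℝ s (log ∘ f) := by
  refine ⟨hf.1, fun x hx y hy a b ha hb hab => ?_⟩
  have hcomb : 0 < a • f x + b • f y := convex_Ioi (0 : ℝ) (hpos x hx) (hpos y hy) ha hb hab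
  exact (strictConcaveOn_log_Ioi.concaveOn.2 (hpos x hx) (hpos y hy) ha hb hab).trans
    (log_le_log hcomb (hf.2 hx hy ha hb hab))

theorem concaveOn_log_const_mul_rpow {a p : ℝ} (ha : a ≠ 0) (hp : 0 ≤ p)
    (hf : ConcaveOn ℝ s f) (hpos : ∀ x ∈ s, 0 < f x) :
    ConcaveOn ℝ s (log ∘ fun x => a * f x ^ p) := by
  refine (((concaveOn_log_comp hf hpos).smul hp).add_const (log a)).congr fun x hx => ?_
  simp only [Pi.add_apply, Function.comp_apply, smul_eq_mul]
  rw [log_mul ha (rpow_pos_of_pos (hpos x hx) p).ne', log_rpow (hpos x hx), add_comm]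

end LogConcave

section GeneralizedSine

variable {κ : ℝ}

theorem differentiable_sinK (κ : ℝ) : Differentiable ℝ (sinK κ) := by
  unfold sinK
  split_ifs <;> fun_prop

theorem sinK_of_pos (hκ : 0 < κ) (r : ℝ) : sinK κ r = sin (√κ * r) / √κ := if_pos hκ

theorem sinK_pos (hκ : 0 < κ) {r : ℝ} (hr : r ∈ Ioo 0 (π / √κ)) : 0 < sinK κ r := by
  have hsqrt : 0 < √κ := sqrt_pos.2 hκ
  rw [sinK_of_pos hκ]
  exact div_pos (sin_pos_of_pos_of_lt_pi (mul_pos hsqrt hr.1) ((lt_div_iff₀' hsqrt).1 hr.2)) hsqrt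

theorem concaveOn_sinK (hκ : 0 < κ) : ConcaveOn ℝ (Icc 0 (π / √κ)) (sinK κ) := by
  have hsqrt : 0 < √κ := sqrt_pos.2 hκ
  have hscaled : ConcaveOn ℝ (Icc 0 (π / √κ)) fun r => sin (√κ * r) :=
    (strictConcaveOn_sin_Icc.concaveOn.comp_linearMap (LinearMap.mulLeft ℝ √κ)).subset
      (fun r hr => ⟨mul_nonneg hsqrt.le hr.1, (le_div_iff₀' hsqrt).1 hr.2⟩) (convex_Icc _ _)
  refine (hscaled.smul (inv_nonneg.2 hsqrt.le)).congr fun r _ => ?_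
  simp only [sinK_of_pos hκ, smul_eq_mul, div_eq_inv_mul]

theorem continuous_sinK_rpow (κ : ℝ) {p : ℝ} (hp : 0 ≤ p) : Continuous fun r => sinK κ r ^ p :=
  (differentiable_sinK κ).continuous.rpow_const fun _ => Or.inr hp

theorem integral_sinK_rpow_pos (hκ : 0 < κ) {p : ℝ} (hp : 0 ≤ p) :
    0 < ∫ r in (0:ℝ)..π / √κ, sinK κ r ^ p :=
  intervalIntegral.intervalIntegral_pos_of_pos_on
    ((continuous_sinK_rpow κ hp).intervalIntegrable _ _)
    (fun _ hr => rpow_pos_of_pos (sinK_pos hκ hr) p) (div_pos pi_pos (sqrt_pos.2 hκ))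

end GeneralizedSine

/-- for `K > 0`, `N > 1`, `κ = K/(N-1)`,
`f(t) = c⁻¹ ∫₀^t sin_κ(r)^{N-1} dr` (with `c` the normalizing constant), the model
isoperimetric profile `h = f' ∘ f⁻¹`, with `f'(t) = c⁻¹ sin_κ(t)^{N-1}`, is concave
on `[0,1]`. -/
theorem model_isoperimetric_profile_concave (K N : ℝ) (hK : 0 < K) (hN : 1 < N) :
    ∀ κ c : ℝ, κ = K / (N - 1) →
      c = ∫ r in (0:ℝ)..(Real.pi / Real.sqrt κ), sinK κ r ^ (N - 1) →
      ∀ f : ℝ → ℝ,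
        (f = fun t => c⁻¹ * ∫ r in (0:ℝ)..t, sinK κ r ^ (N - 1)) →
        ∀ g : ℝ → ℝ,
          (∀ v ∈ Set.Icc (0:ℝ) 1, g v ∈ Set.Icc 0 (Real.pi / Real.sqrt κ) ∧ f (g v) = v) →
          ConcaveOn ℝ (Set.Icc 0 1) (fun v => c⁻¹ * sinK κ (g v) ^ (N - 1)) := by
  rintro κ c hκ hc f rfl g hg
  have hp : 0 < N - 1 := sub_pos.2 hN
  have hκ_pos : 0 < κ := hκ ▸ div_pos hK hp
  have hc_inv : 0 < c⁻¹ := inv_pos.2 (hc ▸ integral_sinK_rpow_pos hκ_pos hp.le)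
  have hcont := continuous_sinK_rpow κ hp.le
  have hderiv : ∀ t, HasDerivAt (fun t => c⁻¹ * ∫ r in (0:ℝ)..t, sinK κ r ^ (N - 1))
      (c⁻¹ * sinK κ t ^ (N - 1)) t := fun t =>
    (hcont.integral_hasStrictDerivAt 0 t).hasDerivAt.const_mul c⁻¹
  have hsin_pos : ∀ t ∈ interior (Icc 0 (π / √κ)), 0 < sinK κ t := fun t ht =>
    sinK_pos hκ_pos (interior_Icc.subset ht)
  have hlog := concaveOn_log_const_mul_rpow hc_inv.ne' hp.le
    ((concaveOn_sinK hκ_pos).subset interior_subset (convex_Icc _ _).interior) hsin_pos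
  exact concaveOn_density_comp_quantile (φ := fun t => c⁻¹ * sinK κ t ^ (N - 1))
    (convex_Icc 0 (π / √κ)) (convex_Icc 0 1)
    (fun t _ => (hderiv t).continuousAt.continuousWithinAt) (fun t _ => hderiv t)
    (hcont.const_mul c⁻¹).continuousOn
    (((differentiable_sinK κ).differentiableOn.rpow_const
      fun t ht => Or.inl (hsin_pos t ht).ne').const_mul c⁻¹)
    (fun t ht => mul_pos hc_inv (rpow_pos_of_pos (hsin_pos t ht) _)) hlog
    (fun v hv => (hg v hv).1) (fun v hv => (hg v hv).2)
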